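/- Let X be a smooth projective variety of dimension 2d over ℂ and let ℰ ∈ D^b(X) be a ℙ^d-object with associated ℙ^d-twist P_ℰ. Then for every t ≤ 0, h_t(P_ℰ) ≤ -2dt. -/

import Mathlib

open CategoryTheory CategoryTheory.Limits CategoryTheory.Pretriangulated Filter

universe v u

variable (C : Type u) [Category.{v} C] [Preadditive C] [HasZeroObject C]
  [HasShift C ℤ] [∀ n : ℤ, (shiftFunctor C n).Additive] [Pretriangulated C]
  [HasFiniteBiproducts C] [CategoryTheory.Linear ℂ C]
  [∀ X Y : C, Module.Finite ℂ (X ⟶ Y)]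

/-- `BuildVal E t B r` : the object `B` can be built from the zero object by a tower of
`k` distinguished triangles whose successive cones are shifts `E⟦nᵢ⟧` of `E`,
with total weight `r = ∑ᵢ exp(nᵢ t)`. -/
inductive BuildVal (E : C) (t : ℝ) : C → ℝ → Prop
  | zero (Z : C) (hZ : IsZero Z) : BuildVal E t Z 0
  | step (A B : C) (n : ℤ) (r : ℝ)
      (f : A ⟶ B) (g : B ⟶ (shiftFunctor C n).obj E)
      (h : (shiftFunctor C n).obj E ⟶ (shiftFunctor C (1 : ℤ)).obj A)
      (hT : Triangle.mk f g h ∈ distTriang C)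
      (hA : BuildVal E t A r) :
      BuildVal E t B (r + Real.exp ((n : ℝ) * t))

/-- The set of weights `∑ᵢ exp(nᵢ t)` of towers of distinguished triangles with cones
shifts of `E`, ending at an object isomorphic to `F ⊕ F'` for some `F'`. -/
def complexitySet (E F : C) (t : ℝ) : Set ℝ :=
  {r | ∃ B F' : C, BuildVal C E t B r ∧ Nonempty (B ≅ F ⊞ F')}

/-- The complexity `δ_t(E, F)` of `F` relative to `E` (Dimitrov–Haiden–Katzarkov–Kontsevich). -/
noncomputable def complexity (E F : C) (t : ℝ) : ℝ :=
  sInf (complexitySet C E F t)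

/-- `F` lies in the split closure `⟨E⟩` of `E` (expressed via towers). -/
def InSplitClosure (E F : C) : Prop :=
  (complexitySet C E F 0).Nonempty

/-- `G` is a split generator of the triangulated category. -/
def IsSplitGenerator (G : C) : Prop :=
  ∀ F : C, InSplitClosure C G F

/-- The right orthogonal `E^⊥ = {F : Hom^*(E,F) = 0}`. -/
def rightOrthogonal (E : C) : Set C :=
  {F | ∀ (n : ℤ) (f : E ⟶ (shiftFunctor C n).obj F), f = 0}

/-- A `ℙ^d`-object in a ℂ-linear triangulated category (an abstract model of a `ℙ^d`-object
in `D^b(X)` for `X` smooth projective of dimension `2d` over `ℂ`, in the sense of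
Huybrechts–Thomas): `E` is a `2d`-Calabi–Yau object (the Serre-duality reformulation of
`E ⊗ ω_X ≅ E`) and the graded ring `Hom^*(E,E)` is isomorphic to
`H^*(ℙ^d; ℂ) = ℂ[h]/(h^{d+1})`, `deg h = 2`: the graded pieces `Hom^{2k}(E,E)`, `0 ≤ k ≤ d`,
are one-dimensional, spanned by the powers `h^k`, and all other graded pieces vanish. -/
structure PdObject (d : ℕ) where
  E : C
  nonzero : ¬ IsZero E
  /-- Serre-duality form of `E ⊗ ω_X ≅ E` on a `2d`-dimensional variety:
  `Hom(E, F) ≅ Hom(F, E[2d])^∨` for every `F`. -/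
  CY : ∀ F : C, (E ⟶ F) ≃ₗ[ℂ] Module.Dual ℂ (F ⟶ (shiftFunctor C (2 * (d : ℤ))).obj E)
  /-- a generator `h ∈ Hom²(E, E)`. -/
  h : E ⟶ (shiftFunctor C (2 : ℤ)).obj E
  /-- the powers `h^k ∈ Hom^{2k}(E, E)` of `h`. -/
  hpow : ∀ k : ℕ, (E ⟶ (shiftFunctor C (2 * (k : ℤ))).obj E)
  hpow_zero : hpow 0 = (shiftFunctorZero' C (2 * ((0 : ℕ) : ℤ)) (by simp)).inv.app E
  hpow_succ : ∀ k : ℕ,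
    hpow (k + 1) = h ≫ (shiftFunctor C (2 : ℤ)).map (hpow k) ≫
      (shiftFunctorAdd' C (2 * (k : ℤ)) (2 : ℤ) (2 * ((k + 1 : ℕ) : ℤ))
        (by push_cast; ring)).inv.app E
  /-- `Hom^{2k}(E,E)` is one-dimensional for `0 ≤ k ≤ d`. -/
  hom_rank_one : ∀ k : ℕ, k ≤ d →
    Module.finrank ℂ (E ⟶ (shiftFunctor C (2 * (k : ℤ))).obj E) = 1
  /-- all other graded pieces of `Hom^*(E,E)` vanish. -/
  hom_rank_zero : ∀ n : ℤ, (¬ ∃ k : ℕ, k ≤ d ∧ n = 2 * (k : ℤ)) →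
    ∀ f : E ⟶ (shiftFunctor C n).obj E, f = 0
  /-- the powers `h^k`, `k ≤ d`, are nonzero (so they span the graded pieces). -/
  hpow_ne_zero : ∀ k : ℕ, k ≤ d → hpow k ≠ 0

/-- The `ℙ^d`-twist `P_E` associated to a `ℙ^d`-object `E` (Huybrechts–Thomas):
an autoequivalence `P` such that each `P(F)` is obtained by the double cone construction
`P(F) = Cone(Cone(Hom^{*-2}(E,F) ⊗ E → Hom^*(E,F) ⊗ E) → F)`.
Here `H F` models the object `Hom^*(E,F) ⊗ E`, i.e. the finite direct sum of shifts
`E[-n]` with multiplicity `dim Hom^n(E,F)`, so that `Hom^{*-2}(E,F) ⊗ E = (H F)[-2]`;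
`θ F` models the map `h^∨·id − id·h`; `T F` models its cone; and `P F` is the cone of
the induced evaluation map `T F → F`. -/
structure PdTwist (d : ℕ) extends PdObject C d where
  /-- the twist autoequivalence. -/
  P : C ≌ C
  /-- the twist commutes with the shift functors. -/
  commShift : P.functor.CommShift ℤ
  /-- `H F` models `Hom^*(E,F) ⊗ E`. -/
  H : C → C
  /-- `H F` is a finite direct sum of shifts `E[-n]`, with multiplicity
  `dim_ℂ Hom^n(E,F)` for each `n`. -/
  H_iso : ∀ F : C, ∃ (k : ℕ) (ns : Fin k → ℤ),
    Nonempty (H F ≅ biproduct (fun i => (shiftFunctor C (ns i)).obj E)) ∧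
    ∀ n : ℤ, (Finset.univ.filter fun i => ns i = -n).card
        = Module.finrank ℂ (E ⟶ (shiftFunctor C n).obj F)
  /-- the map `h^∨·id − id·h : Hom^{*-2}(E,F) ⊗ E → Hom^*(E,F) ⊗ E`. -/
  θ : ∀ F : C, (shiftFunctor C (-2 : ℤ)).obj (H F) ⟶ H F
  /-- the inner cone `T F = Cone(θ F)`. -/
  T : C → C
  ι : ∀ F : C, H F ⟶ T F
  π : ∀ F : C, T F ⟶ (shiftFunctor C (1 : ℤ)).obj ((shiftFunctor C (-2 : ℤ)).obj (H F))
  innerTri : ∀ F : C, Triangle.mk (θ F) (ι F) (π F) ∈ distTriang C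
  /-- the map `T F → F` induced by the evaluation `Hom^*(E,F) ⊗ E → F`. -/
  ev : ∀ F : C, T F ⟶ F
  η : ∀ F : C, F ⟶ P.functor.obj F
  dl : ∀ F : C, P.functor.obj F ⟶ (shiftFunctor C (1 : ℤ)).obj (T F)
  /-- `P F = Cone(T F → F)`. -/
  outerTri : ∀ F : C, Triangle.mk (ev F) (η F) (dl F) ∈ distTriang C

/-!
Put `M = P E`. If `Hom^*(E, X)` begins in degree `a`, then the lowest summand `E[-2d]` of
`Hom^*(E, E) ⊗ E` yields a nonzero composite `M ⟶ E[-2d] ⟶ X[a - 2d]`. For `X = M` this forces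
`a ≥ 2d`, because `M` has no negative self-extensions, and a dimension count gives `a = 2d`. As
`End M` is one-dimensional, `M ≅ E[-2d]`. Hence `Hom^*(E, Pⁿ G)` is `Hom^*(E, G)` shifted by `2dn`,
which multiplies its weight by `exp (-2dnt)`. Since `P F` is an iterated cone of `F` and of shifts
of `Hom^*(E, F) ⊗ E`, the `(n+1)`-st twist costs at most a constant times `exp (-2dnt)`, and these
costs add up to a geometric sum.
-/

section Retracts

variable {𝒟 : Type u} [Category.{v} 𝒟] [Preadditive 𝒟] [HasZeroObject 𝒟]
  [HasShift 𝒟 ℤ] [∀ n : ℤ, (shiftFunctor 𝒟 n).Additive] [Pretriangulated 𝒟]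

lemma nonempty_retract_obj₂_of_distTriang {T T' : Triangle 𝒟} (hT : T ∈ distTriang 𝒟)
    (hT' : T' ∈ distTriang 𝒟) (ρ₁ : Retract T.obj₁ T'.obj₁) (ρ₃ : Retract T.obj₃ T'.obj₃)
    (hi : T.mor₃ ≫ ρ₁.i⟦(1 : ℤ)⟧' = ρ₃.i ≫ T'.mor₃)
    (hr : T'.mor₃ ≫ ρ₁.r⟦(1 : ℤ)⟧' = ρ₃.r ≫ T.mor₃) :
    Nonempty (Retract T.obj₂ T'.obj₂) := by
  obtain ⟨i, hi₁, hi₂⟩ := complete_distinguished_triangle_morphism₂ T T' hT hT' _ _ hi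
  obtain ⟨r, hr₁, hr₂⟩ := complete_distinguished_triangle_morphism₂ T' T hT' hT _ _ hr
  let φ : T ⟶ T' := ⟨ρ₁.i, i, ρ₃.i, hi₁, hi₂, hi⟩
  let ψ : T' ⟶ T := ⟨ρ₁.r, r, ρ₃.r, hr₁, hr₂, hr⟩
  have : IsIso (i ≫ r) := isIso₂_of_isIso₁₃ (φ ≫ ψ) hT hT
    (by change IsIso (ρ₁.i ≫ ρ₁.r); rw [ρ₁.retract]; infer_instance)
    (by change IsIso (ρ₃.i ≫ ρ₃.r); rw [ρ₃.retract]; infer_instance)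
  exact ⟨⟨i, r ≫ inv (i ≫ r), by rw [← Category.assoc, IsIso.hom_inv_id]⟩⟩

/- Without the octahedral axiom the fibre `F` of `B ⟶ D ⟶ Q` need not be the fibre `X` of
`D₁ ⟶ D ⟶ A⟦1⟧`. Lifting in both directions gives `F ⟶ X ⟶ F` which becomes the identity after
composing with `F ⟶ B`; the error thus factors through `Q⟦-1⟧`. -/
lemma nonempty_retract_biprod_of_distTriang {A B D D₁ Q X F : 𝒟}
    {a : A ⟶ B} {b : B ⟶ D} {w : D ⟶ A⟦(1 : ℤ)⟧} (hB : Triangle.mk a b w ∈ distTriang 𝒟)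
    {f : D₁ ⟶ D} {g : D ⟶ Q} {h : Q ⟶ D₁⟦(1 : ℤ)⟧} (hD : Triangle.mk f g h ∈ distTriang 𝒟)
    {a' : A ⟶ X} {b' : X ⟶ D₁} (hX : Triangle.mk a' b' (f ≫ w) ∈ distTriang 𝒟)
    {i : F ⟶ B} {k : Q ⟶ F⟦(1 : ℤ)⟧} (hF : Triangle.mk i (b ≫ g) k ∈ distTriang 𝒟) :
    Nonempty (Retract F (X ⊞ Q⟦(-1 : ℤ)⟧)) := by
  have hfg : f ≫ g = 0 := comp_distTriang_mor_zero₁₂ _ hD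
  have hbw : b ≫ w = 0 := comp_distTriang_mor_zero₂₃ _ hB
  have hibg : i ≫ b ≫ g = 0 := comp_distTriang_mor_zero₁₂ _ hF
  obtain ⟨(c : X ⟶ B), hac : a' ≫ c = 𝟙 A ≫ a, hcb : b' ≫ f = c ≫ b⟩ :=
    complete_distinguished_triangle_morphism₂ _ _ hX hB (𝟙 A) f
      (show (f ≫ w) ≫ (𝟙 A)⟦(1 : ℤ)⟧' = f ≫ w by simp)
  obtain ⟨(c' : X ⟶ F), hc' : c = c' ≫ i⟩ := Triangle.coyoneda_exact₂ _ hF c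
    (show c ≫ b ≫ g = 0 by rw [← Category.assoc, ← hcb, Category.assoc, hfg, comp_zero])
  obtain ⟨(z : F ⟶ D₁), hz : i ≫ b = z ≫ f⟩ := Triangle.coyoneda_exact₂ _ hD (i ≫ b)
    (show (i ≫ b) ≫ g = 0 by rw [Category.assoc, hibg])
  obtain ⟨(x : F ⟶ X), hx : z = x ≫ b'⟩ := Triangle.coyoneda_exact₃ _ hX z
    (show z ≫ f ≫ w = 0 by rw [← Category.assoc, ← hz, Category.assoc, hbw, comp_zero])
  obtain ⟨(y : F ⟶ A), hy : x ≫ c - i = y ≫ a⟩ := Triangle.coyoneda_exact₂ _ hB (x ≫ c - i)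
    (show (x ≫ c - i) ≫ b = 0 by
      rw [Preadditive.sub_comp, Category.assoc, ← hcb, hz, hx, Category.assoc, sub_self])
  have hlift : ((x - y ≫ a') ≫ c') ≫ i = i := by
    rw [Category.assoc, ← hc', Preadditive.sub_comp, Category.assoc, hac, Category.id_comp,
      ← hy, sub_sub_cancel]
  obtain ⟨(v : F ⟶ Q⟦(-1 : ℤ)⟧), hv⟩ := Triangle.coyoneda_exact₂ _ (inv_rot_of_distTriang _ hF)
    (𝟙 F - (x - y ≫ a') ≫ c')
    (show (𝟙 F - (x - y ≫ a') ≫ c') ≫ i = 0 by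
      rw [Preadditive.sub_comp, hlift, Category.id_comp, sub_self])
  exact ⟨biprod.lift (x - y ≫ a') v, biprod.desc c' _, by
    rw [biprod.lift_desc]; exact add_eq_of_eq_sub' hv.symm⟩

end Retracts

section Towers

variable {𝒟 : Type u} [Category.{v} 𝒟] [Preadditive 𝒟] [HasZeroObject 𝒟]
  [HasShift 𝒟 ℤ] [∀ n : ℤ, (shiftFunctor 𝒟 n).Additive] [Pretriangulated 𝒟]
  {G : 𝒟} {t : ℝ}

namespace BuildVal

lemma nonneg {B : 𝒟} {r : ℝ} (h : BuildVal 𝒟 G t B r) : 0 ≤ r := by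
  induction h with
  | zero => exact le_rfl
  | step => positivity

lemma exists_weight {B : 𝒟} {r : ℝ} (h : BuildVal 𝒟 G t B r) (t' : ℝ) :
    ∃ r', BuildVal 𝒟 G t' B r' := by
  induction h with
  | zero Z hZ => exact ⟨0, zero Z hZ⟩
  | step A B n _ f g h hT _ ih =>
    obtain ⟨r', hr'⟩ := ih
    exact ⟨_, step A B n r' f g h hT hr'⟩

lemma of_distTriang {T : Triangle 𝒟} (hT : T ∈ distTriang 𝒟) {r : ℝ}
    (h : BuildVal 𝒟 G t T.obj₁ r) {n : ℤ} (e : T.obj₃ ≅ G⟦n⟧) :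
    BuildVal 𝒟 G t T.obj₂ (r + Real.exp (n * t)) := by
  refine step T.obj₁ T.obj₂ n r T.mor₁ (T.mor₂ ≫ e.hom) (e.inv ≫ T.mor₃) ?_ h
  exact isomorphic_distinguished _ hT _
    (Triangle.isoMk _ _ (Iso.refl _) (Iso.refl _) e.symm
      (show T.mor₁ ≫ 𝟙 _ = 𝟙 _ ≫ T.mor₁ by simp)
      (show (T.mor₂ ≫ e.hom) ≫ e.inv = 𝟙 _ ≫ T.mor₂ by simp)
      (show (e.inv ≫ T.mor₃) ≫ (𝟙 _)⟦(1 : ℤ)⟧' = e.inv ≫ T.mor₃ by simp))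

lemma shift {B : 𝒟} {r : ℝ} (h : BuildVal 𝒟 G t B r) (m : ℤ) :
    BuildVal 𝒟 G t (B⟦m⟧) (Real.exp (m * t) * r) := by
  induction h with
  | zero Z hZ => simpa using zero _ ((shiftFunctor 𝒟 m).map_isZero hZ)
  | step A B n r f g h hT _ ih =>
    have hB := of_distTriang (Triangle.shift_distinguished _ hT m) ih
      ((shiftFunctorAdd 𝒟 n m).symm.app G)
    have hexp : Real.exp ((n + m : ℤ) * t) = Real.exp (m * t) * Real.exp (n * t) := by
      rw [← Real.exp_add]
      push_cast
      ring_nf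
    rw [mul_add, ← hexp]
    exact hB

end BuildVal

lemma mem_complexitySet_iff {F : 𝒟} {r : ℝ} :
    r ∈ complexitySet 𝒟 G F t ↔ ∃ B, BuildVal 𝒟 G t B r ∧ Nonempty (Retract F B) := by
  constructor
  · rintro ⟨B, F', hB, ⟨e⟩⟩
    exact ⟨B, hB, ⟨⟨biprod.inl ≫ e.inv, e.hom ≫ biprod.fst, by simp⟩⟩⟩
  · rintro ⟨B, hB, ⟨ρ⟩⟩
    obtain ⟨Z, f, g, hT⟩ := distinguished_cocone_triangle ρ.i
    have : IsSplitMono ρ.i := ⟨⟨ρ.r, ρ.retract⟩⟩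
    obtain ⟨e, -, -⟩ := exists_iso_binaryBiproduct_of_distTriang _ hT
      (Triangle.mor₃_eq_zero_of_mono₁ _ hT (inferInstance : Mono ρ.i))
    exact ⟨B, Z, hB, ⟨e⟩⟩

lemma InSplitClosure.complexitySet_nonempty {F : 𝒟} (h : InSplitClosure 𝒟 G F) (t : ℝ) :
    (complexitySet 𝒟 G F t).Nonempty := by
  obtain ⟨r, B, F', hB, e⟩ := h
  obtain ⟨r', hB'⟩ := hB.exists_weight t
  exact ⟨r', B, F', hB', e⟩

namespace complexitySet

lemma nonneg {F : 𝒟} {r : ℝ} (h : r ∈ complexitySet 𝒟 G F t) : 0 ≤ r := by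
  obtain ⟨B, F', hB, -⟩ := h
  exact hB.nonneg

lemma of_retract {F F' : 𝒟} (ρ : Retract F' F) {r : ℝ} (h : r ∈ complexitySet 𝒟 G F t) :
    r ∈ complexitySet 𝒟 G F' t := by
  rw [mem_complexitySet_iff] at h ⊢
  obtain ⟨B, hB, ⟨ρ'⟩⟩ := h
  exact ⟨B, hB, ⟨ρ.trans ρ'⟩⟩

lemma shift {F : 𝒟} {r : ℝ} (h : r ∈ complexitySet 𝒟 G F t) (m : ℤ) :
    Real.exp (m * t) * r ∈ complexitySet 𝒟 G (F⟦m⟧) t := by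
  rw [mem_complexitySet_iff] at h ⊢
  obtain ⟨B, hB, ⟨ρ⟩⟩ := h
  exact ⟨_, hB.shift m, ⟨ρ.map _⟩⟩

lemma of_isZero {Z : 𝒟} (hZ : IsZero Z) : 0 ∈ complexitySet 𝒟 G Z t :=
  mem_complexitySet_iff.2 ⟨Z, .zero Z hZ, ⟨.refl Z⟩⟩

lemma add_exp_mem {T : Triangle 𝒟} (hT : T ∈ distTriang 𝒟) {r : ℝ}
    (h : r ∈ complexitySet 𝒟 G T.obj₁ t) {n : ℤ} (e : T.obj₃ ≅ G⟦n⟧) :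
    r + Real.exp (n * t) ∈ complexitySet 𝒟 G T.obj₂ t := by
  rw [mem_complexitySet_iff] at h ⊢
  obtain ⟨A, hA, ⟨ρ⟩⟩ := h
  obtain ⟨B, a, b, hB⟩ := distinguished_cocone_triangle₂ (T.mor₃ ≫ ρ.i⟦(1 : ℤ)⟧')
  refine ⟨B, hA.of_distTriang hB e, nonempty_retract_obj₂_of_distTriang hT hB ρ (.refl _) ?_ ?_⟩
  · exact (Category.id_comp _).symm
  · change (T.mor₃ ≫ ρ.i⟦(1 : ℤ)⟧') ≫ ρ.r⟦(1 : ℤ)⟧' = 𝟙 _ ≫ T.mor₃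
    rw [Category.assoc, ← Functor.map_comp, ρ.retract, CategoryTheory.Functor.map_id,
      Category.comp_id, Category.id_comp]

lemma add_mem_of_buildVal {D : 𝒟} {s : ℝ} (hD : BuildVal 𝒟 G t D s) :
    ∀ {A B : 𝒟} {r : ℝ} {a : A ⟶ B} {b : B ⟶ D} {w : D ⟶ A⟦(1 : ℤ)⟧},
      Triangle.mk a b w ∈ distTriang 𝒟 → r ∈ complexitySet 𝒟 G A t →
        r + (1 + Real.exp (-t)) * s ∈ complexitySet 𝒟 G B t := by
  induction hD with
  | zero Z hZ =>
    intro A B r a b w hT hA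
    have : IsIso a := (Triangle.isZero₃_iff_isIso₁ _ hT).1 hZ
    have hB := of_retract (Retract.ofIso (asIso a).symm) hA
    simpa using hB
  | step D₁ D n s f g h hD _ ih =>
    intro A B r a b w hB hA
    obtain ⟨X, a', b', hX⟩ := distinguished_cocone_triangle₂ (f ≫ w)
    obtain ⟨F, i, k, hF⟩ := distinguished_cocone_triangle₁ (b ≫ g)
    obtain ⟨ρ⟩ := nonempty_retract_biprod_of_distTriang hB hD hX hF
    have hXQ := add_exp_mem (binaryBiproductTriangle_distinguished X (G⟦n⟧⟦(-1 : ℤ)⟧))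
      (ih hX hA) ((shiftFunctorAdd 𝒟 n (-1)).symm.app G)
    have hB := add_exp_mem hF (of_retract ρ hXQ) (Iso.refl _)
    have hexp : Real.exp ((n + -1 : ℤ) * t) = Real.exp (-t) * Real.exp (n * t) := by
      rw [← Real.exp_add]
      push_cast
      ring_nf
    have hsum : r + (1 + Real.exp (-t)) * (s + Real.exp (n * t)) =
        r + (1 + Real.exp (-t)) * s + Real.exp ((n + -1 : ℤ) * t) + Real.exp (n * t) := by
      rw [hexp]
      ring
    rw [hsum]
    exact hB

/- The factor `1 + exp (-t)` is the price for the missing octahedral axiom. -/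
lemma add_mem_of_distTriang {T : Triangle 𝒟} (hT : T ∈ distTriang 𝒟) {r s : ℝ}
    (h₁ : r ∈ complexitySet 𝒟 G T.obj₁ t) (h₃ : s ∈ complexitySet 𝒟 G T.obj₃ t) :
    r + (1 + Real.exp (-t)) * s ∈ complexitySet 𝒟 G T.obj₂ t := by
  obtain ⟨D, hD, ⟨ρ⟩⟩ := mem_complexitySet_iff.1 h₃
  obtain ⟨B, a, b, hB⟩ := distinguished_cocone_triangle₂ (ρ.r ≫ T.mor₃)
  obtain ⟨ρ₂⟩ := nonempty_retract_obj₂_of_distTriang hT hB (.refl _) ρ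
    (show T.mor₃ ≫ (𝟙 _)⟦(1 : ℤ)⟧' = ρ.i ≫ ρ.r ≫ T.mor₃ by simp)
    (show (ρ.r ≫ T.mor₃) ≫ (𝟙 _)⟦(1 : ℤ)⟧' = ρ.r ≫ T.mor₃ by simp)
  exact of_retract ρ₂ (add_mem_of_buildVal hD hB h₁)

lemma sum_mem_biproduct [HasFiniteBiproducts 𝒟] {k : ℕ} (f : Fin k → 𝒟) (r : Fin k → ℝ)
    (h : ∀ i, r i ∈ complexitySet 𝒟 G (f i) t) :
    ∑ i, (1 + Real.exp (-t)) * r i ∈ complexitySet 𝒟 G (⨁ f) t := by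
  induction k with
  | zero =>
    have hZ : IsZero (⨁ f) := (IsZero.iff_id_eq_zero _).2 (by ext i; exact i.elim0)
    simpa using of_isZero hZ
  | succ k ih =>
    let ρ : Retract (⨁ f) ((⨁ fun i : Fin k => f i.succ) ⊞ f 0) :=
      { i := biprod.lift (biproduct.lift fun i => biproduct.π f i.succ) (biproduct.π f 0)
        r := biprod.desc (biproduct.desc fun i => biproduct.ι f i.succ) (biproduct.ι f 0)
        retract := by
          rw [biprod.lift_desc, biproduct.lift_desc, ← biproduct.total, Fin.sum_univ_succ,
            add_comm (biproduct.π f 0 ≫ _)] }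
    rw [Fin.sum_univ_succ, add_comm (_ * r 0)]
    exact of_retract ρ (add_mem_of_distTriang (binaryBiproductTriangle_distinguished _ _)
      (ih _ _ fun i => h i.succ) (h 0))

end complexitySet

lemma complexity_nonneg (G F : 𝒟) (t : ℝ) : 0 ≤ complexity 𝒟 G F t :=
  Real.sInf_nonneg fun _ => complexitySet.nonneg

lemma complexity_le_of_mem {F : 𝒟} {r : ℝ} (h : r ∈ complexitySet 𝒟 G F t) :
    complexity 𝒟 G F t ≤ r :=
  csInf_le ⟨0, fun _ => complexitySet.nonneg⟩ h

end Towers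

section HomVanishing

variable {𝒟 : Type u} [Category.{v} 𝒟] [HasShift 𝒟 ℤ]

/-- The bijection `Hom(X, Y[n]) ≃ Hom(X[a], Y[b])`, for `n + a = b`, given by shifting by `a`. -/
noncomputable def homShiftEquiv (X Y : 𝒟) {n a b : ℤ} (h : n + a = b) :
    (X ⟶ Y⟦n⟧) ≃ (X⟦a⟧ ⟶ Y⟦b⟧) :=
  ((Functor.FullyFaithful.ofFullyFaithful (shiftFunctor 𝒟 a)).homEquiv).trans
    (((shiftFunctorAdd' 𝒟 n a b h).symm.app Y).homToEquiv)

variable [Preadditive 𝒟] [HasZeroObject 𝒟] [∀ n : ℤ, (shiftFunctor 𝒟 n).Additive]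
  [Pretriangulated 𝒟] {T : Triangle 𝒟}

lemma subsingleton_hom_obj₂ (hT : T ∈ distTriang 𝒟) {X : 𝒟}
    (h₁ : Subsingleton (X ⟶ T.obj₁)) (h₃ : Subsingleton (X ⟶ T.obj₃)) :
    Subsingleton (X ⟶ T.obj₂) :=
  subsingleton_of_forall_eq 0 fun f => by
    obtain ⟨g, rfl⟩ := Triangle.coyoneda_exact₂ T hT f (h₃.elim _ _)
    rw [h₁.elim g 0, zero_comp]

lemma eq_zero_of_comp_mor₁_eq_zero (hT : T ∈ distTriang 𝒟) {X : 𝒟}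
    (h₃ : Subsingleton (X ⟶ T.obj₃⟦(-1 : ℤ)⟧)) {f : X ⟶ T.obj₁} (hf : f ≫ T.mor₁ = 0) : f = 0 := by
  obtain ⟨g, rfl⟩ := Triangle.coyoneda_exact₂ _ (inv_rot_of_distTriang T hT) f hf
  rw [show g = 0 from h₃.elim _ _]
  exact zero_comp

lemma eq_zero_of_mor₃_comp_eq_zero (hT : T ∈ distTriang 𝒟) {Y : 𝒟}
    (h₂ : Subsingleton (T.obj₂⟦(1 : ℤ)⟧ ⟶ Y)) {f : T.obj₁⟦(1 : ℤ)⟧ ⟶ Y} (hf : T.mor₃ ≫ f = 0) :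
    f = 0 := by
  obtain ⟨g, rfl⟩ := Triangle.yoneda_exact₃ _ (rot_of_distTriang T hT) f hf
  rw [show g = 0 from h₂.elim _ _]
  exact comp_zero

end HomVanishing

section Bricks

variable {𝒜 : Type*} [Category* 𝒜] [HasZeroMorphisms 𝒜] {X Y : 𝒜}

/-- A brick: an object all of whose nonzero endomorphisms are invertible. The zero object is
allowed. -/
def IsBrick (X : 𝒜) : Prop :=
  ∀ f : X ⟶ X, f ≠ 0 → IsIso f

namespace IsBrick

lemma map (hX : IsBrick X) {ℬ : Type*} [Category* ℬ] [HasZeroMorphisms ℬ] (F : 𝒜 ⥤ ℬ)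
    [F.Full] [F.Faithful] [F.PreservesZeroMorphisms] : IsBrick (F.obj X) := by
  intro f hf
  obtain ⟨f, rfl⟩ := F.map_surjective f
  have := hX f fun h => hf (by rw [h, F.map_zero])
  infer_instance

lemma isIso_of_comp_ne_zero (hX : IsBrick X) (hY : IsBrick Y) {u : X ⟶ Y} {w : Y ⟶ X}
    (h : u ≫ w ≠ 0) : IsIso u := by
  have hX' : IsIso (u ≫ w) := hX _ h
  have hY' : IsIso (w ≫ u) := hY _ fun h₀ => h <| by
    rw [← cancel_mono (u ≫ w), zero_comp, Category.assoc, reassoc_of% h₀, zero_comp, comp_zero]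
  have : Epi u := epi_of_epi w u
  have : IsSplitMono u := ⟨⟨w ≫ inv (u ≫ w), by rw [← Category.assoc, IsIso.hom_inv_id]⟩⟩
  exact isIso_of_epi_of_isSplitMono u

end IsBrick

end Bricks

section Dimensions

variable {𝕜 : Type*} [Field 𝕜] {𝒜 : Type*} [Category* 𝒜] [Preadditive 𝒜] [Linear 𝕜 𝒜]

lemma bijective_smul_id_of_finrank_eq_one {X : 𝒜} (hX : Module.finrank 𝕜 (X ⟶ X) = 1) :
    Function.Bijective fun c : 𝕜 => c • 𝟙 X := by
  have : Nontrivial (X ⟶ X) := Module.nontrivial_of_finrank_eq_succ hX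
  have hid : 𝟙 X ≠ 0 := fun h => not_subsingleton (X ⟶ X) <|
    subsingleton_of_forall_eq 0 fun f => by rw [← Category.comp_id f, h, comp_zero]
  exact ⟨smul_left_injective 𝕜 hid, (finrank_eq_one_iff_of_nonzero' (𝟙 X) hid).1 hX⟩

lemma IsBrick.of_finrank_eq_one {X : 𝒜} (hX : Module.finrank 𝕜 (X ⟶ X) = 1) : IsBrick X := by
  intro f hf
  obtain ⟨c, rfl⟩ := (bijective_smul_id_of_finrank_eq_one hX).surjective f
  have hc : c ≠ 0 := fun h => hf (by simp only [h, zero_smul])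
  exact ⟨c⁻¹ • 𝟙 X, by simp [smul_smul, hc], by simp [smul_smul, hc]⟩

variable (𝕜)

lemma finrank_hom_congr {X X' Y Y' : 𝒜} (e : X ≅ X') (e' : Y ≅ Y') :
    Module.finrank 𝕜 (X ⟶ Y) = Module.finrank 𝕜 (X' ⟶ Y') :=
  (Linear.homCongr 𝕜 e e').finrank_eq

lemma finrank_hom_biproduct {ι : Type*} [Fintype ι] (X : 𝒜) (f : ι → 𝒜) [HasBiproduct f]
    [∀ i, Module.Finite 𝕜 (X ⟶ f i)] :
    Module.finrank 𝕜 (X ⟶ ⨁ f) = ∑ i, Module.finrank 𝕜 (X ⟶ f i) := by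
  let e : (X ⟶ ⨁ f) ≃ₗ[𝕜] ∀ i, X ⟶ f i :=
    { toFun φ i := φ ≫ biproduct.π f i
      invFun := biproduct.lift
      map_add' _ _ := by ext; simp
      map_smul' _ _ := by ext; simp
      left_inv _ := by ext; simp
      right_inv _ := by ext; simp }
  rw [e.finrank_eq, Module.finrank_pi_fintype]

/- On the scalar endomorphisms of `X` the functor induces a bijection `σ` of `𝕜`, and the two Hom
spaces correspond semilinearly over `σ`. -/
lemma finrank_hom_map {ℬ : Type*} [Category* ℬ] [Preadditive ℬ] [Linear 𝕜 ℬ] (F : 𝒜 ⥤ ℬ)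
    [F.Full] [F.Faithful] [F.Additive] {X : 𝒜} (hX : Module.finrank 𝕜 (X ⟶ X) = 1)
    (hFX : Module.finrank 𝕜 (F.obj X ⟶ F.obj X) = 1) (Y : 𝒜) :
    Module.finrank 𝕜 (F.obj X ⟶ F.obj Y) = Module.finrank 𝕜 (X ⟶ Y) := by
  let hF := Functor.FullyFaithful.ofFullyFaithful F
  let σ : 𝕜 ≃ 𝕜 := (Equiv.ofBijective _ (bijective_smul_id_of_finrank_eq_one hX)).trans
    (hF.homEquiv.trans (Equiv.ofBijective _ (bijective_smul_id_of_finrank_eq_one hFX)).symm)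
  have hσ (c : 𝕜) : σ c • 𝟙 (F.obj X) = F.map (c • 𝟙 X) :=
    (Equiv.ofBijective _ (bijective_smul_id_of_finrank_eq_one hFX)).apply_symm_apply _
  let τ : (X ⟶ Y) ≃+ (F.obj X ⟶ F.obj Y) := { hF.homEquiv with map_add' _ _ := F.map_add }
  have hτ (c : 𝕜) (f : X ⟶ Y) : τ (c • f) = σ c • τ f := calc
    F.map (c • f) = F.map ((c • 𝟙 X) ≫ f) := by rw [Linear.smul_comp, Category.id_comp]
    _ = σ c • F.map f := by
      rw [F.map_comp, ← hσ, Linear.smul_comp, Category.id_comp]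
  have hrank := lift_rank_eq_of_equiv_equiv σ τ σ.bijective hτ
  simpa only [Module.finrank, Cardinal.toNat_lift] using congrArg Cardinal.toNat hrank.symm

lemma finrank_hom_obj₁_le {𝒟 : Type*} [Category* 𝒟] [Preadditive 𝒟] [HasZeroObject 𝒟]
    [HasShift 𝒟 ℤ] [∀ n : ℤ, (shiftFunctor 𝒟 n).Additive] [Pretriangulated 𝒟] [Linear 𝕜 𝒟]
    {T : Triangle 𝒟} (hT : T ∈ distTriang 𝒟) {X : 𝒟}
    (h₃ : Subsingleton (X ⟶ T.obj₃⟦(-1 : ℤ)⟧)) [Module.Finite 𝕜 (X ⟶ T.obj₂)] :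
    Module.finrank 𝕜 (X ⟶ T.obj₁) ≤ Module.finrank 𝕜 (X ⟶ T.obj₂) :=
  LinearMap.finrank_le_finrank_of_injective (f := Linear.rightComp 𝕜 X T.mor₁) <|
    (injective_iff_map_eq_zero _).2 fun _ => eq_zero_of_comp_mor₁_eq_zero hT h₃

end Dimensions

namespace PdObject

variable {𝒟 : Type u} [Category.{v} 𝒟] [Preadditive 𝒟] [HasShift 𝒟 ℤ] [Linear ℂ 𝒟] {d : ℕ}
  (o : PdObject 𝒟 d)

lemma subsingleton_hom_shift {n : ℤ} (hn : ¬∃ k : ℕ, k ≤ d ∧ n = 2 * (k : ℤ)) :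
    Subsingleton (o.E ⟶ o.E⟦n⟧) :=
  subsingleton_of_forall_eq 0 (o.hom_rank_zero n hn)

lemma finrank_hom_shift_le_one (n : ℤ) : Module.finrank ℂ (o.E ⟶ o.E⟦n⟧) ≤ 1 := by
  by_cases hn : ∃ k : ℕ, k ≤ d ∧ n = 2 * (k : ℤ)
  · obtain ⟨k, hk, rfl⟩ := hn
    exact (o.hom_rank_one k hk).le
  · have := o.subsingleton_hom_shift hn
    exact Module.finrank_zero_of_subsingleton.trans_le zero_le_one

lemma finrank_end : Module.finrank ℂ (o.E ⟶ o.E) = 1 := by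
  rw [← o.hom_rank_one 0 d.zero_le]
  exact finrank_hom_congr ℂ (Iso.refl _) ((shiftFunctorZero' 𝒟 _ (by simp)).symm.app o.E)

lemma isBrick : IsBrick o.E :=
  IsBrick.of_finrank_eq_one o.finrank_end

end PdObject

section PdTwists

variable {𝒟 : Type u} [Category.{v} 𝒟] [Preadditive 𝒟] [HasZeroObject 𝒟]
  [HasShift 𝒟 ℤ] [∀ n : ℤ, (shiftFunctor 𝒟 n).Additive] [Pretriangulated 𝒟]
  [HasFiniteBiproducts 𝒟] [Linear ℂ 𝒟] {d : ℕ}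

namespace PdTwist

variable (tw : PdTwist 𝒟 d)

lemma nonempty_H_iso_biproduct :
    Nonempty (tw.H tw.E ≅ ⨁ fun j : Fin (d + 1) => tw.E⟦-(2 * (j : ℤ))⟧) := by
  obtain ⟨k, ns, ⟨e⟩, hns⟩ := tw.H_iso tw.E
  have hcard (j : Fin (d + 1)) : {i | ns i = -(2 * (j : ℤ))}.ncard = 1 := by
    rw [Set.ncard_eq_toFinset_card', Set.toFinset_ofPred]
    exact (hns _).trans (tw.hom_rank_one j (Nat.le_of_lt_succ j.2))
  choose σ hσ using fun j => Set.ncard_eq_one.1 (hcard j)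
  have hσ' (j : Fin (d + 1)) (i : Fin k) : ns i = -(2 * (j : ℤ)) ↔ i = σ j :=
    Set.ext_iff.1 (hσ j) i
  have hinj : Function.Injective σ := fun j j' h => by
    have hj := (hσ' j _).2 rfl
    have hj' := (hσ' j' _).2 h
    ext
    omega
  have hsurj : Function.Surjective σ := fun i => by
    by_contra! hi
    have := tw.subsingleton_hom_shift (n := -ns i) <| by
      rintro ⟨j, hj, hij⟩
      exact hi ⟨j, by omega⟩ ((hσ' ⟨j, by omega⟩ i).1 (by simp; omega)).symm
    have hzero := hns (-ns i)
    rw [Module.finrank_zero_of_subsingleton, Finset.card_eq_zero] at hzero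
    simpa using Finset.filter_eq_empty_iff.1 hzero (Finset.mem_univ i)
  refine ⟨e ≪≫ (biproduct.whiskerEquiv (Equiv.ofBijective σ ⟨hinj, hsurj⟩) fun j => ?_).symm⟩
  exact eqToIso (by rw [← (hσ' j (σ j)).2 rfl]; rfl)

lemma nonempty_H_shift_iso_biproduct (n : ℤ) :
    Nonempty ((tw.H tw.E)⟦n⟧ ≅ ⨁ fun j : Fin (d + 1) => tw.E⟦-(2 * (j : ℤ)) + n⟧) := by
  obtain ⟨e⟩ := tw.nonempty_H_iso_biproduct
  exact ⟨(shiftFunctor 𝒟 n).mapIso e ≪≫ (shiftFunctor 𝒟 n).mapBiproduct _ ≪≫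
    biproduct.mapIso fun j => (shiftFunctorAdd 𝒟 _ n).symm.app tw.E⟩

/- The map `p` projects `T E ⟶ (H E)⟦-2⟧⟦1⟧` to its lowest summand; all the other summands of
`H E`, as well as `E` itself, are shifts `E⟦m⟧` with `m > -2d - 1`. -/
lemma exists_forall_eq_zero_of_dl_comp_eq_zero :
    ∃ p : tw.T tw.E ⟶ tw.E⟦-(2 * (d : ℤ)) - 1⟧, ∀ ⦃N : 𝒟⦄,
      (∀ m > -(2 * (d : ℤ)) - 1, Subsingleton (tw.E⟦m⟧ ⟶ N)) →
        ∀ f : tw.E⟦-(2 * (d : ℤ)) - 1⟧ ⟶ N, tw.dl tw.E ≫ (p ≫ f)⟦(1 : ℤ)⟧' = 0 → f = 0 := by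
  obtain ⟨e⟩ := tw.nonempty_H_iso_biproduct
  let S : Fin (d + 1) → 𝒟 := fun j => tw.E⟦-(2 * (j : ℤ))⟧
  let eS : (S (Fin.last d))⟦(-2 : ℤ)⟧⟦(1 : ℤ)⟧ ≅ tw.E⟦-(2 * (d : ℤ)) - 1⟧ :=
    (shiftFunctorAdd' 𝒟 (-2) 1 (-1) (by simp)).symm.app _ ≪≫
      (shiftFunctorAdd' 𝒟 _ (-1) _ (by simp; ring)).symm.app tw.E
  let q : tw.H tw.E ⟶ S (Fin.last d) := e.hom ≫ biproduct.π S _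
  have : IsSplitEpi q := inferInstance
  let p : (tw.H tw.E)⟦(-2 : ℤ)⟧⟦(1 : ℤ)⟧ ⟶ tw.E⟦-(2 * (d : ℤ)) - 1⟧ :=
    q⟦(-2 : ℤ)⟧'⟦(1 : ℤ)⟧' ≫ eS.hom
  refine ⟨tw.π tw.E ≫ p, fun N hN f hf => ?_⟩
  have hEN : Subsingleton (tw.E⟦(1 : ℤ)⟧ ⟶ N⟦(1 : ℤ)⟧) :=
    let _ := hN 0 (by omega)
    ((((shiftFunctorZero 𝒟 ℤ).app tw.E).symm.homCongr (Iso.refl N)).symm.trans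
      (Functor.FullyFaithful.ofFullyFaithful (shiftFunctor 𝒟 (1 : ℤ))).homEquiv).symm.subsingleton
  have hHN : Subsingleton ((tw.H tw.E)⟦(1 : ℤ)⟧ ⟶ N) := by
    obtain ⟨e₁⟩ := tw.nonempty_H_shift_iso_biproduct 1
    refine subsingleton_of_forall_eq 0 fun g => ?_
    rw [← cancel_epi e₁.inv]
    ext j
    have := hN (-(2 * (j : ℤ)) + 1) (by omega)
    exact Subsingleton.elim _ _
  have hπ : (tw.π tw.E ≫ p) ≫ f = 0 := (shiftFunctor 𝒟 (1 : ℤ)).map_injective <| by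
    rw [Functor.map_zero]
    exact eq_zero_of_mor₃_comp_eq_zero (tw.outerTri tw.E) hEN hf
  have hp : p ≫ f = 0 :=
    eq_zero_of_mor₃_comp_eq_zero (tw.innerTri tw.E) hHN ((Category.assoc _ _ _).symm.trans hπ)
  rwa [← cancel_epi p, comp_zero]

lemma exists_comp_ne_zero {X : 𝒟} {a : ℤ} (hlt : ∀ m < a, Subsingleton (tw.E ⟶ X⟦m⟧))
    (ha : Nontrivial (tw.E ⟶ X⟦a⟧)) :
    ∃ (u : tw.P.functor.obj tw.E ⟶ tw.E⟦-(2 * (d : ℤ))⟧)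
      (w : tw.E⟦-(2 * (d : ℤ))⟧ ⟶ X⟦a - 2 * (d : ℤ)⟧), u ≫ w ≠ 0 := by
  obtain ⟨p, hp⟩ := tw.exists_forall_eq_zero_of_dl_comp_eq_zero
  have hN : ∀ m > -(2 * (d : ℤ)) - 1, Subsingleton (tw.E⟦m⟧ ⟶ X⟦a - 2 * (d : ℤ) - 1⟧) :=
    fun m hm =>
      let _ := hlt (a - 2 * (d : ℤ) - 1 - m) (by omega)
      (homShiftEquiv tw.E X (n := a - 2 * (d : ℤ) - 1 - m) (by ring)).symm.subsingleton
  have : Nontrivial (tw.E⟦-(2 * (d : ℤ)) - 1⟧ ⟶ X⟦a - 2 * (d : ℤ) - 1⟧) :=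
    (homShiftEquiv tw.E X (n := a) (by ring)).symm.nontrivial
  obtain ⟨f, hf⟩ := exists_ne (0 : tw.E⟦-(2 * (d : ℤ)) - 1⟧ ⟶ X⟦a - 2 * (d : ℤ) - 1⟧)
  let e : tw.E⟦-(2 * (d : ℤ)) - 1⟧⟦(1 : ℤ)⟧ ≅ tw.E⟦-(2 * (d : ℤ))⟧ :=
    (shiftFunctorAdd' 𝒟 _ 1 _ (by ring)).symm.app tw.E
  let e' : X⟦a - 2 * (d : ℤ) - 1⟧⟦(1 : ℤ)⟧ ≅ X⟦a - 2 * (d : ℤ)⟧ :=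
    (shiftFunctorAdd' 𝒟 _ 1 _ (by ring)).symm.app X
  refine ⟨tw.dl tw.E ≫ p⟦(1 : ℤ)⟧' ≫ e.hom, e.inv ≫ f⟦(1 : ℤ)⟧' ≫ e'.hom,
    fun h => hf (hp hN f ?_)⟩
  rw [← cancel_mono e'.hom, zero_comp, ← h]
  simp

lemma subsingleton_hom_twist_shift_of_neg {n : ℤ} (hn : n < 0) :
    Subsingleton (tw.P.functor.obj tw.E ⟶ (tw.P.functor.obj tw.E)⟦n⟧) := by
  let := tw.commShift
  have := tw.subsingleton_hom_shift (n := n) (by rintro ⟨k, -, hk⟩; omega)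
  exact (((tw.P.functor.commShiftIso n).symm.app tw.E).homToEquiv.trans
    tw.P.fullyFaithfulFunctor.homEquiv.symm).subsingleton

variable [∀ X Y : 𝒟, Module.Finite ℂ (X ⟶ Y)]

lemma finite_setOf_nontrivial_hom (F : 𝒟) : {n : ℤ | Nontrivial (tw.E ⟶ F⟦n⟧)}.Finite := by
  obtain ⟨k, ns, -, hns⟩ := tw.H_iso F
  refine (Set.finite_range fun i => -ns i).subset fun n (hn : Nontrivial _) => ?_
  have hpos : 0 < Module.finrank ℂ (tw.E ⟶ F⟦n⟧) := Module.finrank_pos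
  rw [← hns, Finset.card_pos] at hpos
  obtain ⟨i, hi⟩ := hpos
  exact ⟨i, neg_eq_iff_eq_neg.2 (Finset.mem_filter.1 hi).2⟩

lemma subsingleton_hom_twist_shift {n : ℤ} (hn : n < 2 * d) :
    Subsingleton (tw.E ⟶ (tw.P.functor.obj tw.E)⟦n⟧) := by
  let M := tw.P.functor.obj tw.E
  by_contra hnon
  have hfin : ({m : ℤ | Nontrivial (tw.E ⟶ M⟦m⟧)} ∩ Set.Iio (2 * (d : ℤ))).Finite :=
    (tw.finite_setOf_nontrivial_hom M).inter_of_left _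
  obtain ⟨a, ⟨ha, had : a < 2 * (d : ℤ)⟩, hmin⟩ :=
    Set.exists_min_image _ id hfin ⟨n, not_subsingleton_iff_nontrivial.1 hnon, hn⟩
  have hlt (m : ℤ) (hm : m < a) : Subsingleton (tw.E ⟶ M⟦m⟧) := by
    by_contra hnon'
    exact hm.not_ge (hmin m ⟨not_subsingleton_iff_nontrivial.1 hnon', hm.trans had⟩)
  obtain ⟨u, w, huw⟩ := tw.exists_comp_ne_zero hlt ha
  exact huw ((tw.subsingleton_hom_twist_shift_of_neg (by omega)).elim _ _)

lemma finrank_hom_H_shift (n : ℤ) :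
    Module.finrank ℂ (tw.E ⟶ (tw.H tw.E)⟦n⟧) =
      ∑ j : Fin (d + 1), Module.finrank ℂ (tw.E ⟶ tw.E⟦-(2 * (j : ℤ)) + n⟧) := by
  obtain ⟨e⟩ := tw.nonempty_H_shift_iso_biproduct n
  rw [finrank_hom_congr ℂ (Iso.refl _) e, finrank_hom_biproduct]

lemma finrank_hom_H_shift_lt :
    Module.finrank ℂ (tw.E ⟶ (tw.H tw.E)⟦2 * (d : ℤ) + 2⟧) <
      Module.finrank ℂ (tw.E ⟶ (tw.H tw.E)⟦2 * (d : ℤ)⟧) := by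
  rw [tw.finrank_hom_H_shift, tw.finrank_hom_H_shift]
  have hone (j : Fin (d + 1)) :
      Module.finrank ℂ (tw.E ⟶ tw.E⟦-(2 * (j : ℤ)) + 2 * (d : ℤ)⟧) = 1 := by
    rw [show -(2 * (j : ℤ)) + 2 * (d : ℤ) = 2 * ((d - j : ℕ) : ℤ) by omega]
    exact tw.hom_rank_one _ (d.sub_le j)
  simp only [hone]
  refine Finset.sum_lt_sum (fun j _ => tw.finrank_hom_shift_le_one _) ⟨0, Finset.mem_univ _, ?_⟩
  have := tw.subsingleton_hom_shift
    (n := -(2 * ((0 : Fin (d + 1)) : ℤ)) + (2 * (d : ℤ) + 2))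
    (by rintro ⟨k, hk, hk'⟩; rw [Fin.val_zero] at hk'; omega)
  exact Module.finrank_zero_of_subsingleton.trans_lt zero_lt_one

/- Otherwise `θ` would embed `Hom(E, (H E)⟦2d⟧)` into `Hom(E, (H E)⟦2d + 2⟧)`. -/
lemma nontrivial_hom_twist_shift :
    Nontrivial (tw.E ⟶ (tw.P.functor.obj tw.E)⟦2 * (d : ℤ)⟧) := by
  by_contra htriv
  have hE : Subsingleton (tw.E ⟶ tw.E⟦(1 : ℤ)⟧⟦2 * (d : ℤ)⟧) :=
    let _ := tw.subsingleton_hom_shift (n := 1 + 2 * (d : ℤ)) (by rintro ⟨k, -, hk⟩; omega)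
    ((shiftFunctorAdd 𝒟 1 (2 * (d : ℤ))).symm.app tw.E).homToEquiv.subsingleton
  have hT : Subsingleton (tw.E ⟶ (tw.T tw.E)⟦(1 : ℤ)⟧⟦2 * (d : ℤ)⟧) :=
    subsingleton_hom_obj₂ (Triangle.shift_distinguished _
      (rot_of_distTriang _ (rot_of_distTriang _ (tw.outerTri tw.E))) (2 * (d : ℤ)))
      (not_nontrivial_iff_subsingleton.1 htriv) hE
  let eT : (tw.T tw.E)⟦2 * (d : ℤ) + 2⟧⟦(-1 : ℤ)⟧ ≅ (tw.T tw.E)⟦(1 : ℤ)⟧⟦2 * (d : ℤ)⟧ :=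
    (shiftFunctorAdd' 𝒟 _ (-1) _ (by ring)).symm.app _ ≪≫
      (shiftFunctorAdd 𝒟 1 (2 * (d : ℤ))).app _
  have hle : Module.finrank ℂ (tw.E ⟶ (tw.H tw.E)⟦(-2 : ℤ)⟧⟦2 * (d : ℤ) + 2⟧) ≤
      Module.finrank ℂ (tw.E ⟶ (tw.H tw.E)⟦2 * (d : ℤ) + 2⟧) :=
    finrank_hom_obj₁_le ℂ
      (Triangle.shift_distinguished _ (tw.innerTri tw.E) (2 * (d : ℤ) + 2))
      eT.homToEquiv.subsingleton
  let eH : (tw.H tw.E)⟦(-2 : ℤ)⟧⟦2 * (d : ℤ) + 2⟧ ≅ (tw.H tw.E)⟦2 * (d : ℤ)⟧ :=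
    (shiftFunctorAdd' 𝒟 (-2) _ _ (by ring)).symm.app _
  rw [finrank_hom_congr ℂ (Iso.refl _) eH] at hle
  exact hle.not_gt tw.finrank_hom_H_shift_lt

lemma nonempty_twist_iso_shift :
    Nonempty (tw.P.functor.obj tw.E ≅ tw.E⟦-(2 * (d : ℤ))⟧) := by
  obtain ⟨u, w, huw⟩ := tw.exists_comp_ne_zero (fun _ => tw.subsingleton_hom_twist_shift)
    tw.nontrivial_hom_twist_shift
  let e := (shiftFunctorZero' 𝒟 (2 * (d : ℤ) - 2 * (d : ℤ)) (sub_self _)).app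
    (tw.P.functor.obj tw.E)
  have huw' : u ≫ w ≫ e.hom ≠ 0 := fun h => huw <| by
    rw [← cancel_mono e.hom, Category.assoc, h, zero_comp]
  have := (tw.isBrick.map tw.P.functor).isIso_of_comp_ne_zero
    (tw.isBrick.map (shiftFunctor 𝒟 (-(2 * (d : ℤ))))) huw'
  exact ⟨asIso u⟩

lemma finrank_hom_twist_shift (F : 𝒟) (n : ℤ) :
    Module.finrank ℂ (tw.E ⟶ (tw.P.functor.obj F)⟦n + 2 * (d : ℤ)⟧) =
      Module.finrank ℂ (tw.E ⟶ F⟦n⟧) := by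
  obtain ⟨e⟩ := tw.nonempty_twist_iso_shift
  let := tw.commShift
  have : tw.P.functor.Additive := Functor.additive_of_preserves_binary_products _
  let Ψ := tw.P.functor ⋙ shiftFunctor 𝒟 (2 * (d : ℤ))
  let eE : Ψ.obj tw.E ≅ tw.E := (shiftFunctor 𝒟 (2 * (d : ℤ))).mapIso e ≪≫
    (shiftFunctorCompIsoId 𝒟 (-(2 * (d : ℤ))) (2 * (d : ℤ)) (by ring)).app tw.E
  let eF : Ψ.obj (F⟦n⟧) ≅ (tw.P.functor.obj F)⟦n + 2 * (d : ℤ)⟧ :=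
    (shiftFunctor 𝒟 (2 * (d : ℤ))).mapIso ((tw.P.functor.commShiftIso n).app F) ≪≫
      (shiftFunctorAdd 𝒟 n (2 * (d : ℤ))).symm.app _
  rw [← finrank_hom_congr ℂ eE eF]
  exact finrank_hom_map ℂ Ψ tw.finrank_end ((finrank_hom_congr ℂ eE eE).trans tw.finrank_end) _

end PdTwist
end PdTwists

section Entropy

/-- The weighted total dimension `∑ₙ dim Homⁿ(E, F) exp(-n t)` of the graded vector space
`Hom^*(E, F)`. It is meaningful only when finitely many of the spaces `Homⁿ(E, F)` are nonzero;
otherwise `finsum` may return `0`. -/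
noncomputable def homWeight {𝒟 : Type*} [Category* 𝒟] [Preadditive 𝒟] [HasShift 𝒟 ℤ]
    [Linear ℂ 𝒟] (E F : 𝒟) (t : ℝ) : ℝ :=
  ∑ᶠ n : ℤ, Module.finrank ℂ (E ⟶ F⟦n⟧) * Real.exp (-n * t)

variable {𝒟 : Type u} [Category.{v} 𝒟] [Preadditive 𝒟] [HasShift 𝒟 ℤ] [Linear ℂ 𝒟]

lemma homWeight_nonneg (E F : 𝒟) (t : ℝ) : 0 ≤ homWeight E F t :=
  finsum_nonneg fun _ => by positivity

lemma homWeight_eq_sum_exp {E F : 𝒟} {ι : Type*} [Fintype ι] {ns : ι → ℤ}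
    (hns : ∀ n : ℤ, (Finset.univ.filter fun i => ns i = -n).card =
      Module.finrank ℂ (E ⟶ F⟦n⟧)) (t : ℝ) :
    homWeight E F t = ∑ i, Real.exp (ns i * t) := by
  have hcard (n : ℤ) : (Finset.univ.filter fun i => -ns i = n).card =
      Module.finrank ℂ (E ⟶ F⟦n⟧) := by
    simp only [← hns, neg_eq_iff_eq_neg]
  have hsupp : (Function.support fun n : ℤ => Module.finrank ℂ (E ⟶ F⟦n⟧) * Real.exp (-n * t)) ⊆
      Finset.univ.image fun i => -ns i := fun n hn => by
    have hpos : 0 < (Finset.univ.filter fun i => -ns i = n).card :=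
      Nat.pos_of_ne_zero fun h => hn (by simp [← hcard, h])
    obtain ⟨i, hi⟩ := Finset.card_pos.1 hpos
    exact Finset.mem_coe.2 <|
      Finset.mem_image.2 ⟨i, Finset.mem_univ i, (Finset.mem_filter.1 hi).2⟩
  calc homWeight E F t
      = ∑ n ∈ Finset.univ.image fun i => -ns i,
          (Finset.univ.filter fun i => -ns i = n).card • Real.exp (-n * t) := by
        simp only [homWeight, finsum_eq_sum_of_support_subset _ hsupp, hcard, nsmul_eq_mul]
    _ = ∑ i, Real.exp (ns i * t) := by
        rw [← Finset.sum_comp (fun n : ℤ => Real.exp (-n * t)) fun i => -ns i]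
        simp only [Int.cast_neg, neg_neg]

variable [HasZeroObject 𝒟] [∀ n : ℤ, (shiftFunctor 𝒟 n).Additive] [Pretriangulated 𝒟]
  [HasFiniteBiproducts 𝒟] {d : ℕ}

namespace PdTwist

variable (tw : PdTwist 𝒟 d)

lemma exists_add_mul_homWeight_mem_complexitySet {G : 𝒟} {t δ : ℝ}
    (hE : δ ∈ complexitySet 𝒟 G tw.E t) :
    ∃ K, 0 ≤ K ∧ ∀ (F : 𝒟) (r : ℝ), r ∈ complexitySet 𝒟 G F t →
      r + K * homWeight tw.E F t ∈ complexitySet 𝒟 G (tw.P.functor.obj F) t := by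
  have hδ := complexitySet.nonneg hE
  let κ := 1 + Real.exp (-t)
  let s (n : ℤ) := Real.exp (n * t)
  refine ⟨κ * (s 1 * (κ * δ + κ * (s 1 * (s (-2) * (κ * δ))))), by positivity, fun F r hF => ?_⟩
  obtain ⟨k, ns, ⟨e⟩, hns⟩ := tw.H_iso F
  have hH := complexitySet.of_retract (.ofIso e)
    (complexitySet.sum_mem_biproduct _ _ fun i => complexitySet.shift hE (ns i))
  have hT := complexitySet.add_mem_of_distTriang (rot_of_distTriang _ (tw.innerTri F)) hH
    (complexitySet.shift (complexitySet.shift hH (-2)) 1)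
  have hP : _ ∈ complexitySet 𝒟 G (tw.P.functor.obj F) t := complexitySet.add_mem_of_distTriang
    (rot_of_distTriang _ (tw.outerTri F)) hF (complexitySet.shift hT 1)
  have hsum : ∑ i, κ * (Real.exp (ns i * t) * δ) = κ * δ * homWeight tw.E F t := by
    rw [homWeight_eq_sum_exp hns, Finset.mul_sum]
    exact Finset.sum_congr rfl fun i _ => by ring
  rw [hsum] at hP
  convert hP using 1
  simp only [κ, s]
  ring

variable [∀ X Y : 𝒟, Module.Finite ℂ (X ⟶ Y)]

lemma homWeight_twist (F : 𝒟) (t : ℝ) :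
    homWeight tw.E (tw.P.functor.obj F) t = Real.exp (-2 * d * t) * homWeight tw.E F t := by
  rw [homWeight, ← finsum_comp_equiv (Equiv.addRight (2 * (d : ℤ)))]
  refine Eq.trans (finsum_congr fun n => ?_) (smul_finsum (Real.exp (-2 * d * t)) _).symm
  rw [smul_eq_mul, Equiv.coe_addRight, tw.finrank_hom_twist_shift, mul_left_comm, ← Real.exp_add]
  push_cast
  ring_nf

lemma homWeight_iterate_twist (F : 𝒟) (t : ℝ) (n : ℕ) :
    homWeight tw.E ((fun X => tw.P.functor.obj X)^[n] F) t =
      Real.exp (-2 * d * t) ^ n * homWeight tw.E F t := by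
  induction n with
  | zero => simp
  | succ n ih =>
    rw [Function.iterate_succ_apply', homWeight_twist, ih]
    ring

lemma exists_add_mul_sum_pow_mem_complexitySet {G F : 𝒟} {t δ a : ℝ}
    (hE : δ ∈ complexitySet 𝒟 G tw.E t) (hF : a ∈ complexitySet 𝒟 G F t) :
    ∃ K, 0 ≤ K ∧ ∀ n : ℕ, a + K * ∑ j ∈ Finset.range n, Real.exp (-2 * d * t) ^ j ∈
      complexitySet 𝒟 G ((fun X => tw.P.functor.obj X)^[n] F) t := by
  obtain ⟨K, hK, hstep⟩ := tw.exists_add_mul_homWeight_mem_complexitySet hE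
  refine ⟨K * homWeight tw.E F t, mul_nonneg hK (homWeight_nonneg _ _ _), fun n => ?_⟩
  induction n with
  | zero => simpa using hF
  | succ n ih =>
    have hsucc := hstep _ _ ih
    rw [← Function.iterate_succ_apply' (fun X => tw.P.functor.obj X),
      homWeight_iterate_twist] at hsucc
    convert hsucc using 1
    rw [Finset.sum_range_succ]
    ring

lemma isBigO_complexity_iterate_twist {G F : 𝒟} (hE : InSplitClosure 𝒟 G tw.E)
    (hF : InSplitClosure 𝒟 G F) (t : ℝ) :
    (fun n : ℕ => complexity 𝒟 G ((fun X => tw.P.functor.obj X)^[n] F) t) =O[atTop]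
      fun n : ℕ => n * Real.exp (n * max 0 (-2 * d * t)) := by
  set w := Real.exp (-2 * d * t)
  set W := Real.exp (max 0 (-2 * d * t)) with hW
  obtain ⟨δ, hδ⟩ := hE.complexitySet_nonempty t
  obtain ⟨a, ha⟩ := hF.complexitySet_nonempty t
  obtain ⟨K, hK, hmem⟩ := tw.exists_add_mul_sum_pow_mem_complexitySet hδ ha
  have ha₀ := complexitySet.nonneg ha
  have hW₁ : 1 ≤ W := Real.one_le_exp (le_max_left _ _)
  have hwW : w ≤ W := Real.exp_le_exp.2 (le_max_right _ _)
  refine Asymptotics.IsBigO.of_bound (a + K) ?_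
  filter_upwards [eventually_ge_atTop 1] with n hn
  have hn₁ : (1 : ℝ) ≤ n := by exact_mod_cast hn
  have hgeom : ∑ j ∈ Finset.range n, w ^ j ≤ n * W ^ n := calc
    ∑ j ∈ Finset.range n, w ^ j ≤ ∑ _j ∈ Finset.range n, W ^ n :=
      Finset.sum_le_sum fun j hj => (pow_le_pow_left₀ (Real.exp_pos _).le hwW j).trans
        (pow_le_pow_right₀ hW₁ (Finset.mem_range.1 hj).le)
    _ = n * W ^ n := by rw [Finset.sum_const, Finset.card_range, nsmul_eq_mul]
  rw [Real.norm_of_nonneg (complexity_nonneg _ _ _), Real.exp_nat_mul, ← hW,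
    Real.norm_of_nonneg (by positivity)]
  calc complexity 𝒟 G ((fun X => tw.P.functor.obj X)^[n] F) t
      ≤ a + K * ∑ j ∈ Finset.range n, w ^ j := complexity_le_of_mem (hmem n)
    _ ≤ a * (n * W ^ n) + K * (n * W ^ n) := by
      gcongr
      exact le_mul_of_one_le_right ha₀ (one_le_mul_of_one_le_of_one_le hn₁ (one_le_pow₀ hW₁))
    _ = (a + K) * (n * W ^ n) := by ring

end PdTwist

lemma limsup_log_div_le_of_isBigO {x : ℕ → ℝ} {p : ℕ} {c : ℝ} (hc : 0 ≤ c)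
    (hx : x =O[atTop] fun n : ℕ => (n : ℝ) ^ p * Real.exp (n * c)) :
    atTop.limsup (fun n : ℕ => ((Real.log (x n) / n : ℝ) : EReal)) ≤ (c : EReal) := by
  obtain ⟨K, hK, hbound⟩ := hx.exists_pos
  have hlim : Tendsto (fun n : ℕ => Real.log (max K 1) / n + p * (Real.log n / n) + c) atTop
      (nhds c) := by
    have hlog : Tendsto (fun n : ℕ => Real.log n / n) atTop (nhds 0) :=
      Real.isLittleO_log_id_atTop.tendsto_div_nhds_zero.comp tendsto_natCast_atTop_atTop
    simpa using ((tendsto_const_div_atTop_nhds_zero_nat _).add (hlog.const_mul _)).add_const c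
  rw [← ((continuous_coe_real_ereal.tendsto c).comp hlim).limsup_eq]
  refine limsup_le_limsup ?_
  filter_upwards [eventually_ge_atTop 1, hbound.bound] with n hn hxn
  have hn₁ : (1 : ℝ) ≤ n := by exact_mod_cast hn
  have hlog : Real.log (x n) ≤ Real.log (max K 1) + p * Real.log n + n * c := by
    by_cases hx₀ : x n = 0
    · have := Real.log_nonneg (le_max_right K 1)
      have := Real.log_nonneg hn₁
      rw [hx₀, Real.log_zero]
      positivity
    calc Real.log (x n) = Real.log ‖x n‖ := (Real.log_abs _).symm
      _ ≤ Real.log (max K 1 * (n ^ p * Real.exp (n * c))) := by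
        refine Real.log_le_log (norm_pos_iff.2 hx₀) (hxn.trans ?_)
        rw [Real.norm_of_nonneg (by positivity)]
        gcongr
        exact le_max_left K 1
      _ = Real.log (max K 1) + p * Real.log n + n * c := by
        rw [Real.log_mul (by positivity) (by positivity), Real.log_mul (by positivity)
          (by positivity), Real.log_pow, Real.log_exp, add_assoc]
  refine EReal.coe_le_coe_iff.2 ?_
  calc Real.log (x n) / n ≤ (Real.log (max K 1) + p * Real.log n + n * c) / n := by gcongr
    _ = Real.log (max K 1) / n + p * (Real.log n / n) + c := by field_simp

theorem entropy_PdTwist_le_general [∀ X Y : 𝒟, Module.Finite ℂ (X ⟶ Y)] (tw : PdTwist 𝒟 d)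
    {G F : 𝒟} (hE : InSplitClosure 𝒟 G tw.E) (hF : InSplitClosure 𝒟 G F) (t : ℝ) :
    atTop.limsup (fun n : ℕ =>
        ((Real.log (complexity 𝒟 G ((fun X => tw.P.functor.obj X)^[n] F) t) / n : ℝ) : EReal))
      ≤ ((max 0 (-2 * (d : ℝ) * t) : ℝ) : EReal) :=
  limsup_log_div_le_of_isBigO (p := 1) (le_max_left _ _) <| by
    simpa only [pow_one] using tw.isBigO_complexity_iterate_twist hE hF t

end Entropy

/-- For every `t ≤ 0`, `h_t(P_ℰ) ≤ -2dt` (stated as a `limsup` bound on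
the defining sequence of the categorical entropy, for any split generator). -/
theorem entropy_PdTwist_le (d : ℕ) (tw : PdTwist C d) (t : ℝ) (ht : t ≤ 0) :
    ∀ G : C, IsSplitGenerator C G →
      atTop.limsup (fun n : ℕ =>
          ((Real.log (complexity C G ((fun X => tw.P.functor.obj X)^[n] G) t) / n : ℝ) : EReal))
        ≤ ((-2 * (d : ℝ) * t : ℝ) : EReal) := by
  intro G hG
  rw [← max_eq_right (mul_nonneg_of_nonpos_of_nonpos (by simp : -2 * (d : ℝ) ≤ 0) ht)]
  exact entropy_PdTwist_le_general tw (hG tw.E) (hG G) t
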